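/- For every d ∈ ℕ and every ρ > 0 there is a constant c (depending only on d and ρ) such that the following holds. Let n ∈ ℕ, let r > 0, set R = ρ·r, let x_1, …, x_n ∈ ℝ^d satisfy |x_i − x_j| ≥ 2R for all i ≠ j, and let p = (p_1, …, p_n) be a probability vector. Let μ = ∑_{i=1}^n p_i δ_{x_i}. Then H(μ * n_{r²}) ≥ d·log r + H(p) − c, where H(p) = ∑_{i=1}^n −p_i log p_i is the Shannon entropy of p. -/

import Mathlib

open MeasureTheory Real

/-- Density of the centered Gaussian on `ℝ^d` with covariance matrix `y • I`. -/
noncomputable def gaussD (d : ℕ) (y : ℝ) (x : EuclideanSpace ℝ (Fin d)) : ℝ :=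
  (2 * Real.pi * y) ^ (-(d : ℝ) / 2) * Real.exp (-‖x‖ ^ 2 / (2 * y))

/-- The differential entropy `H(μ * n_y) = ∫ -f log f` where `f` is the density of `μ * n_y`. -/
noncomputable def entG (d : ℕ) (μ : Measure (EuclideanSpace ℝ (Fin d))) (y : ℝ) : ℝ :=
  ∫ x, Real.negMulLog (∫ z, gaussD d y (x - z) ∂μ)

/-!
Let `gᵢ` be probability densities with `∑ i, gᵢ ≤ M` everywhere. The log-sum inequality, which is
Jensen's inequality for `negMulLog` with weights `gᵢ`, gives pointwise
`∑ i, gᵢ * negMulLog pᵢ ≤ negMulLog (∑ i, pᵢ * gᵢ) + (∑ i, pᵢ * gᵢ) * log M`,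
and integrating yields `H(p) - log M ≤ H(∑ i, pᵢ gᵢ)`.

For Gaussians of variance `y` centered at `2R`-separated points such an `M` comes from the bound
`n_y(x) ≤ 2 ^ (d / 2) * exp (R ^ 2 / (2 * y)) * n_{2y}(z)` for `|z - x| < R`: integrating over the
disjoint balls of radius `R` gives `M = 2 ^ (d / 2) * exp (R ^ 2 / (2 * y)) / vol (B R)`. With
`R = ρ * r` and `y = r ^ 2`, only the volume depends on `r`, through the factor `r ^ d`.
-/

section NegMulLog

variable {ι : Type*} [Fintype ι]

lemma sum_mul_negMulLog_le {w p : ι → ℝ} {M : ℝ} (hw : ∀ i, 0 ≤ w i) (hp : ∀ i, 0 ≤ p i)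
    (hM : ∑ i, w i ≤ M) :
    ∑ i, w i * negMulLog (p i) ≤ negMulLog (∑ i, w i * p i) + (∑ i, w i * p i) * log M := by
  rcases (Finset.sum_nonneg fun i _ => hw i).eq_or_lt' with hW | hW
  · have hw0 : ∀ i, w i = 0 := fun i =>
      (Finset.sum_eq_zero_iff_of_nonneg fun j _ => hw j).1 hW i (Finset.mem_univ i)
    simp [hw0]
  set W := ∑ i, w i
  have hwp : 0 ≤ ∑ i, w i * p i := Finset.sum_nonneg fun i _ => mul_nonneg (hw i) (hp i)
  have jensen := concaveOn_negMulLog.le_map_centerMass (t := Finset.univ) (fun i _ => hw i) hW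
    (fun i _ => hp i)
  simp only [Finset.centerMass, smul_eq_mul] at jensen
  calc ∑ i, w i * negMulLog (p i) = W * (W⁻¹ * ∑ i, w i * negMulLog (p i)) := by
        rw [mul_inv_cancel_left₀ hW.ne']
    _ ≤ W * negMulLog (W⁻¹ * ∑ i, w i * p i) := by gcongr; exact jensen
    _ = negMulLog (∑ i, w i * p i) + (∑ i, w i * p i) * log W := by
        rw [negMulLog_mul, negMulLog, log_inv]
        field_simp
        ring
    _ ≤ negMulLog (∑ i, w i * p i) + (∑ i, w i * p i) * log M := by gcongr

lemma negMulLog_sum_le {a : ι → ℝ} (ha : ∀ i, 0 ≤ a i) :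
    negMulLog (∑ i, a i) ≤ ∑ i, negMulLog (a i) := by
  simp only [negMulLog_eq_neg, Finset.sum_neg_distrib, Finset.sum_mul]
  refine neg_le_neg (Finset.sum_le_sum fun i _ => ?_)
  rcases (ha i).eq_or_lt' with hi | hi
  · simp [hi]
  · gcongr
    exact Finset.single_le_sum (fun j _ => ha j) (Finset.mem_univ i)

lemma abs_negMulLog_le_two_mul_sqrt {x : ℝ} (h0 : 0 ≤ x) (h1 : x ≤ 1) :
    |negMulLog x| ≤ 2 * √x := by
  rw [abs_of_nonneg (negMulLog_nonneg h0 h1)]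
  calc negMulLog x = 2 * √x * negMulLog √x := by
        rw [← mul_self_sqrt h0, negMulLog_mul, mul_self_sqrt h0]
        ring
    _ ≤ 2 * √x * 1 := by
        gcongr
        linarith [negMulLog_le_one_sub_self (sqrt_nonneg x), sqrt_nonneg x]
    _ = 2 * √x := mul_one _

end NegMulLog

section Mixture

variable {ι α : Type*} [Fintype ι] [MeasurableSpace α] {ν : Measure α}

lemma integrable_negMulLog_const_mul {f : α → ℝ} (hf : Integrable f ν)
    (hfent : Integrable (fun a => negMulLog (f a)) ν) (c : ℝ) :
    Integrable (fun a => negMulLog (c * f a)) ν := by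
  simp only [negMulLog_mul]
  exact (hf.mul_const _).add (hfent.const_mul c)

lemma integrable_negMulLog_sum {f : ι → α → ℝ} (hf0 : ∀ i a, 0 ≤ f i a)
    (hf : ∀ i, Integrable (f i) ν) (hfent : ∀ i, Integrable (fun a => negMulLog (f i a)) ν) :
    Integrable (fun a => negMulLog (∑ i, f i a)) ν := by
  have hsum : Integrable (fun a => ∑ i, f i a) ν := integrable_finsetSum _ fun i _ => hf i
  have hsument : Integrable (fun a => ∑ i, negMulLog (f i a)) ν :=
    integrable_finsetSum _ fun i _ => hfent i
  refine integrable_of_le_of_le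
    (continuous_negMulLog.comp_aestronglyMeasurable hsum.aestronglyMeasurable)
    (.of_forall fun a => ?_) (.of_forall fun a => negMulLog_sum_le fun i => hf0 i a)
    (hsument.sub (hsum.mul_const (log (Fintype.card ι)))) hsument
  have := sum_mul_negMulLog_le (w := fun _ : ι => 1) (fun _ => zero_le_one)
    (fun i => hf0 i a) le_rfl
  simpa [sub_le_iff_le_add] using this

theorem sum_negMulLog_sub_le_integral_negMulLog_sum_mul {g : ι → α → ℝ} {p : ι → ℝ} {M : ℝ}
    (hg0 : ∀ i a, 0 ≤ g i a) (hg : ∀ i, Integrable (g i) ν) (hg1 : ∀ i, ∫ a, g i a ∂ν = 1)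
    (hgent : ∀ i, Integrable (fun a => negMulLog (g i a)) ν) (hM : ∀ a, ∑ i, g i a ≤ M)
    (hp : ∀ i, 0 ≤ p i) :
    ∑ i, negMulLog (p i) - (∑ i, p i) * log M ≤ ∫ a, negMulLog (∑ i, p i * g i a) ∂ν := by
  have hmix : ∀ i, Integrable (fun a => p i * g i a) ν := fun i => (hg i).const_mul _
  have hcoef : ∀ i, Integrable (fun a => g i a * negMulLog (p i)) ν := fun i => (hg i).mul_const _
  have hlower : Integrable (fun a => ∑ i, g i a * negMulLog (p i)) ν :=
    integrable_finsetSum _ fun i _ => hcoef i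
  have htotal : Integrable (fun a => (∑ i, p i * g i a) * log M) ν :=
    (integrable_finsetSum _ fun i _ => hmix i).mul_const _
  have hent : Integrable (fun a => negMulLog (∑ i, p i * g i a)) ν :=
    integrable_negMulLog_sum (fun i a => mul_nonneg (hp i) (hg0 i a)) hmix
      fun i => integrable_negMulLog_const_mul (hg i) (hgent i) (p i)
  calc ∑ i, negMulLog (p i) - (∑ i, p i) * log M
      = ∫ a, ((∑ i, g i a * negMulLog (p i)) - (∑ i, p i * g i a) * log M) ∂ν := by
        rw [integral_sub hlower htotal, integral_mul_const,
          integral_finsetSum _ fun i _ => hcoef i, integral_finsetSum _ fun i _ => hmix i]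
        simp only [integral_mul_const, integral_const_mul, hg1, one_mul, mul_one]
    _ ≤ ∫ a, negMulLog (∑ i, p i * g i a) ∂ν := by
        refine integral_mono (hlower.sub htotal) hent fun a => ?_
        simpa only [sub_le_iff_le_add, mul_comm (g _ a) (p _)] using
          sum_mul_negMulLog_le (fun i => hg0 i a) hp (hM a)

lemma sum_mul_measureReal_le_integral {s : ι → Set α} {f : α → ℝ} {c : ι → ℝ}
    (hs : ∀ i, MeasurableSet (s i)) (hdisj : Pairwise (Function.onFun Disjoint s))
    (hsν : ∀ i, ν (s i) ≠ ⊤) (hf : Integrable f ν) (hf0 : 0 ≤ f)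
    (hcf : ∀ i, ∀ a ∈ s i, c i ≤ f a) :
    ∑ i, c i * ν.real (s i) ≤ ∫ a, f a ∂ν :=
  calc ∑ i, c i * ν.real (s i) ≤ ∑ i, ∫ a in s i, f a ∂ν := by
        gcongr with i
        exact setIntegral_ge_of_const_le_real (hs i) (hsν i) (hcf i) hf.integrableOn
    _ = ∫ a in ⋃ i, s i, f a ∂ν :=
        (integral_iUnion_fintype hs hdisj fun i => hf.integrableOn).symm
    _ ≤ ∫ a, f a ∂ν := setIntegral_le_integral hf (.of_forall hf0)

lemma integral_sum_smul_dirac [MeasurableSingletonClass α] {p : ι → ℝ} (hp : ∀ i, 0 ≤ p i)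
    (x : ι → α) (f : α → ℝ) :
    ∫ z, f z ∂(∑ i, ENNReal.ofReal (p i) • Measure.dirac (x i)) = ∑ i, p i * f (x i) := by
  rw [integral_finsetSum_measure fun i _ =>
    (integrable_dirac enorm_lt_top).smul_measure ENNReal.ofReal_ne_top]
  simp only [integral_smul_measure, integral_dirac, ENNReal.toReal_ofReal (hp _), smul_eq_mul]

end Mixture

section Gaussian

open Module (finrank)

variable {ι E : Type*} [Fintype ι] [NormedAddCommGroup E] [InnerProductSpace ℝ E]

/-- The density of the centered Gaussian with covariance `y • id` on a Euclidean space `E`;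
it agrees with `gaussD d` on `EuclideanSpace ℝ (Fin d)`. -/
noncomputable def gaussianDensity (y : ℝ) (x : E) : ℝ :=
  (2 * π * y) ^ (-(finrank ℝ E : ℝ) / 2) * exp (-‖x‖ ^ 2 / (2 * y))

lemma gaussD_eq_gaussianDensity (d : ℕ) : gaussD d = gaussianDensity := by
  funext y x
  rw [gaussD, gaussianDensity, finrank_euclideanSpace_fin]

lemma gaussianDensity_nonneg {y : ℝ} (hy : 0 ≤ y) (x : E) : 0 ≤ gaussianDensity y x := by
  unfold gaussianDensity
  positivity

lemma gaussianDensity_eq_mul_exp (y : ℝ) (x : E) :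
    gaussianDensity y x =
      (2 * π * y) ^ (-(finrank ℝ E : ℝ) / 2) * exp (-(2 * y)⁻¹ * ‖x‖ ^ 2) := by
  rw [gaussianDensity, neg_mul, inv_mul_eq_div, ← neg_div]

lemma gaussianDensity_le_mul_gaussianDensity_two_mul {y : ℝ} (hy : 0 < y) (x z : E) :
    gaussianDensity y x ≤
      2 ^ (finrank ℝ E / 2 : ℝ) * exp (‖z - x‖ ^ 2 / (2 * y)) * gaussianDensity (2 * y) z := by
  have hnorm : ‖z‖ ^ 2 ≤ 2 * ‖x‖ ^ 2 + 2 * ‖z - x‖ ^ 2 := by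
    have htri : ‖z‖ ≤ ‖x‖ + ‖z - x‖ := norm_le_insert' z x
    nlinarith [norm_nonneg z, sq_nonneg (‖x‖ - ‖z - x‖)]
  have hexp : -‖x‖ ^ 2 / (2 * y) ≤ ‖z - x‖ ^ 2 / (2 * y) + -‖z‖ ^ 2 / (2 * (2 * y)) := by
    have hdiff : ‖z - x‖ ^ 2 / (2 * y) + -‖z‖ ^ 2 / (2 * (2 * y)) - -‖x‖ ^ 2 / (2 * y) =
        (2 * ‖x‖ ^ 2 + 2 * ‖z - x‖ ^ 2 - ‖z‖ ^ 2) / (4 * y) := by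
      field_simp
      ring
    rw [← sub_nonneg, hdiff]
    exact div_nonneg (sub_nonneg.2 hnorm) (by positivity)
  have hconst : (2 : ℝ) ^ (finrank ℝ E / 2 : ℝ) * (2 * π * (2 * y)) ^ (-(finrank ℝ E : ℝ) / 2) =
      (2 * π * y) ^ (-(finrank ℝ E : ℝ) / 2) := by
    rw [mul_left_comm, mul_rpow two_pos.le (by positivity), ← mul_assoc, ← rpow_add two_pos,
      neg_div, add_neg_cancel, rpow_zero, one_mul]
  calc gaussianDensity y x
      ≤ (2 * π * y) ^ (-(finrank ℝ E : ℝ) / 2) *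
          exp (‖z - x‖ ^ 2 / (2 * y) + -‖z‖ ^ 2 / (2 * (2 * y))) := by
        unfold gaussianDensity
        gcongr
    _ = 2 ^ (finrank ℝ E / 2 : ℝ) * exp (‖z - x‖ ^ 2 / (2 * y)) * gaussianDensity (2 * y) z := by
        rw [gaussianDensity, ← hconst, exp_add]
        ring

variable [FiniteDimensional ℝ E] [MeasurableSpace E] [BorelSpace E]

lemma integrable_exp_neg_mul_sq_norm {b : ℝ} (hb : 0 < b) :
    Integrable (fun x : E => exp (-b * ‖x‖ ^ 2)) := by
  refine .of_integral_ne_zero ?_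
  rw [GaussianFourier.integral_rexp_neg_mul_sq_norm hb]
  positivity

lemma integrable_negMulLog_exp_neg_mul_sq_norm {b : ℝ} (hb : 0 < b) :
    Integrable (fun x : E => negMulLog (exp (-b * ‖x‖ ^ 2))) := by
  refine ((integrable_exp_neg_mul_sq_norm (half_pos hb)).const_mul 2).mono'
    (by fun_prop) (.of_forall fun x => ?_)
  have hle : exp (-b * ‖x‖ ^ 2) ≤ 1 := exp_le_one_iff.2 (by nlinarith [sq_nonneg ‖x‖])
  calc |negMulLog (exp (-b * ‖x‖ ^ 2))| ≤ 2 * √(exp (-b * ‖x‖ ^ 2)) :=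
        abs_negMulLog_le_two_mul_sqrt (exp_nonneg _) hle
    _ = 2 * exp (-(b / 2) * ‖x‖ ^ 2) := by
        rw [← exp_half]
        ring_nf

lemma integrable_gaussianDensity {y : ℝ} (hy : 0 < y) :
    Integrable (gaussianDensity y : E → ℝ) := by
  simp only [funext (gaussianDensity_eq_mul_exp (E := E) y)]
  exact (integrable_exp_neg_mul_sq_norm (by positivity)).const_mul _

lemma integrable_negMulLog_gaussianDensity {y : ℝ} (hy : 0 < y) :
    Integrable (fun x : E => negMulLog (gaussianDensity y x)) := by
  have hb : 0 < (2 * y)⁻¹ := by positivity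
  simp only [gaussianDensity_eq_mul_exp]
  exact integrable_negMulLog_const_mul (integrable_exp_neg_mul_sq_norm hb)
    (integrable_negMulLog_exp_neg_mul_sq_norm hb) _

lemma integral_gaussianDensity {y : ℝ} (hy : 0 < y) : ∫ x : E, gaussianDensity y x = 1 := by
  simp only [gaussianDensity_eq_mul_exp]
  rw [integral_const_mul, GaussianFourier.integral_rexp_neg_mul_sq_norm (by positivity),
    div_inv_eq_mul, mul_left_comm π, ← mul_assoc, ← rpow_add (by positivity), neg_div,
    neg_add_cancel, rpow_zero]

lemma volumeReal_ball_pos (x : E) {R : ℝ} (hR : 0 < R) : 0 < volume.real (Metric.ball x R) :=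
  ENNReal.toReal_pos (Metric.measure_ball_pos _ _ hR).ne' measure_ball_lt_top.ne

lemma sum_gaussianDensity_le {y R : ℝ} (hy : 0 < y) (hR : 0 < R) {x : ι → E}
    (hx : Pairwise fun i j => 2 * R ≤ dist (x i) (x j)) :
    ∑ i, gaussianDensity y (x i) ≤
      2 ^ (finrank ℝ E / 2 : ℝ) * exp (R ^ 2 / (2 * y)) / volume.real (Metric.ball (0 : E) R) := by
  set A : ℝ := 2 ^ (finrank ℝ E / 2 : ℝ) * exp (R ^ 2 / (2 * y)) with hA
  have hvol := volumeReal_ball_pos (0 : E) hR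
  have hdisj : Pairwise (Function.onFun Disjoint fun i => Metric.ball (x i) R) := fun i j hij =>
    Metric.ball_disjoint_ball (by linarith [hx hij])
  have hball : ∀ i, ∀ z ∈ Metric.ball (x i) R,
      gaussianDensity y (x i) ≤ A * gaussianDensity (2 * y) z := by
    intro i z hz
    have hzR : ‖z - x i‖ ≤ R := (mem_ball_iff_norm.1 hz).le
    have hz0 : 0 ≤ gaussianDensity (2 * y) z := gaussianDensity_nonneg (by positivity) z
    exact (gaussianDensity_le_mul_gaussianDensity_two_mul hy (x i) z).trans (by rw [hA]; gcongr)
  rw [le_div_iff₀ hvol, Finset.sum_mul]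
  calc ∑ i, gaussianDensity y (x i) * volume.real (Metric.ball (0 : E) R)
      = ∑ i, gaussianDensity y (x i) * volume.real (Metric.ball (x i) R) := by
        simp only [Measure.addHaar_real_ball_center volume (x _)]
    _ ≤ ∫ z : E, A * gaussianDensity (2 * y) z :=
        sum_mul_measureReal_le_integral (fun _ => measurableSet_ball) hdisj
          (fun _ => measure_ball_lt_top.ne)
          ((integrable_gaussianDensity (by positivity)).const_mul A)
          (fun z => mul_nonneg (by positivity) (gaussianDensity_nonneg (by positivity) z)) hball
    _ = A := by rw [integral_const_mul, integral_gaussianDensity (by positivity), mul_one]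

theorem log_volume_ball_add_sum_negMulLog_le_integral_negMulLog {y R : ℝ} (hy : 0 < y)
    (hR : 0 < R) {x : ι → E} (hx : Pairwise fun i j => 2 * R ≤ dist (x i) (x j))
    {p : ι → ℝ} (hp : ∀ i, 0 ≤ p i) (hp1 : ∑ i, p i = 1) :
    log (volume.real (Metric.ball (0 : E) R)) + ∑ i, negMulLog (p i) -
        (finrank ℝ E / 2 * log 2 + R ^ 2 / (2 * y)) ≤
      ∫ u, negMulLog (∑ i, p i * gaussianDensity y (u - x i)) := by
  have hvol := volumeReal_ball_pos (0 : E) hR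
  have hentropy := sum_negMulLog_sub_le_integral_negMulLog_sum_mul
    (g := fun i u => gaussianDensity y (u - x i)) (ν := volume)
    (fun i u => gaussianDensity_nonneg hy.le _)
    (fun i => (integrable_gaussianDensity hy).comp_sub_right (x i))
    (fun i => by rw [integral_sub_right_eq_self, integral_gaussianDensity hy])
    (fun i => (integrable_negMulLog_gaussianDensity hy).comp_sub_right (x i))
    (fun u => sum_gaussianDensity_le hy hR fun i j hij => (hx hij).trans_eq
      (dist_sub_left u (x i) (x j)).symm) hp
  rw [hp1, one_mul, log_div (by positivity) hvol.ne', log_mul (by positivity) (by positivity),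
    log_rpow two_pos, log_exp] at hentropy
  linarith

lemma log_volume_ball_mul {ρ r : ℝ} (hρ : 0 < ρ) (hr : 0 < r) :
    log (volume.real (Metric.ball (0 : E) (ρ * r))) =
      finrank ℝ E * log r + log (volume.real (Metric.ball (0 : E) ρ)) := by
  have hvol := volumeReal_ball_pos (0 : E) hρ
  rw [mul_comm, Measure.real, Measure.addHaar_ball_mul_of_pos volume 0 hr, ENNReal.toReal_mul,
    ENNReal.toReal_ofReal (by positivity), ← Measure.real, log_mul (by positivity) hvol.ne',
    log_pow]

theorem statement14_general {ρ r : ℝ} (hρ : 0 < ρ) (hr : 0 < r) {x : ι → E}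
    (hx : Pairwise fun i j => 2 * (ρ * r) ≤ dist (x i) (x j)) {p : ι → ℝ} (hp : ∀ i, 0 ≤ p i)
    (hp1 : ∑ i, p i = 1) :
    finrank ℝ E * log r + ∑ i, negMulLog (p i) -
        (finrank ℝ E / 2 * log 2 + ρ ^ 2 / 2 - log (volume.real (Metric.ball (0 : E) ρ))) ≤
      ∫ u, negMulLog (∫ z, gaussianDensity (r ^ 2) (u - z)
        ∂(∑ i, ENNReal.ofReal (p i) • Measure.dirac (x i))) := by
  have hbound := log_volume_ball_add_sum_negMulLog_le_integral_negMulLog (y := r ^ 2)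
    (by positivity) (mul_pos hρ hr) hx hp hp1
  have hscale : (ρ * r) ^ 2 / (2 * r ^ 2) = ρ ^ 2 / 2 := by field_simp
  rw [log_volume_ball_mul hρ hr, hscale] at hbound
  simp only [integral_sum_smul_dirac hp]
  linarith

end Gaussian

theorem statement14 (d : ℕ) (ρ : ℝ) (hρ : 0 < ρ) :
    ∃ c : ℝ, ∀ (n : ℕ), 0 < n → ∀ (r : ℝ), 0 < r →
      ∀ x : Fin n → EuclideanSpace ℝ (Fin d),
        (∀ i j, i ≠ j → 2 * (ρ * r) ≤ dist (x i) (x j)) →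
      ∀ p : Fin n → ℝ, (∀ i, 0 ≤ p i) → ∑ i, p i = 1 →
        (d : ℝ) * Real.log r + (∑ i, Real.negMulLog (p i)) - c ≤
          entG d (∑ i, ENNReal.ofReal (p i) • Measure.dirac (x i)) (r ^ 2) := by
  refine ⟨d / 2 * log 2 + ρ ^ 2 / 2 -
    log (volume.real (Metric.ball (0 : EuclideanSpace ℝ (Fin d)) ρ)),
    fun n _ r hr x hx p hp hp1 => ?_⟩
  simpa only [entG, gaussD_eq_gaussianDensity, finrank_euclideanSpace_fin] using
    statement14_general hρ hr hx hp hp1
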